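/- Let S = ⟨a_1, …, a_k⟩ be a numerical semigroup with minimal generators a_1 < ⋯ < a_k and fix B > 0 and i ∈ {1,…,k}. Then for all sufficiently large x ∈ S, 𝓛_∞(x + a_i, i) ∩ [(x + a_i)/a_i − B, ∞) = 1 + (𝓛_∞(x, i) ∩ [x/a_i − B, ∞)), i.e., the portion of 𝓛_∞(x,i) within B of its top end shifts by exactly 1 when x is replaced by x + a_i. -/

import Mathlib

open Finset

/-- `Zfac a x`: the set of factorizations of `x` with respect to the generators `a`. -/
def Zfac {k : ℕ} (a : Fin k → ℕ) (x : ℕ) : Set (Fin k → ℕ) :=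
  {z | ∑ j, z j * a j = x}

/-- The `∞`-length of a factorization: the maximum coordinate. -/
def linf {k : ℕ} (z : Fin k → ℕ) : ℕ :=
  Finset.univ.sup z

/-- The `0`-length of a factorization: the size of its support. -/
def lzero {k : ℕ} (z : Fin k → ℕ) : ℕ :=
  (Finset.univ.filter fun i => z i ≠ 0).card

/-- `𝓛∞(x)`: the set of `∞`-lengths of factorizations of `x`. -/
def LinfSet {k : ℕ} (a : Fin k → ℕ) (x : ℕ) : Set ℕ :=
  linf '' Zfac a x

/-- `𝓛∞(x, i)`: `∞`-lengths of factorizations whose maximum coordinate is attained at `i`. -/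
def LinfSetI {k : ℕ} (a : Fin k → ℕ) (x : ℕ) (i : Fin k) : Set ℕ :=
  linf '' {z | z ∈ Zfac a x ∧ z i = linf z}

/-- `𝓛₀(x)`: the set of `0`-lengths of factorizations of `x`. -/
def LzeroSet {k : ℕ} (a : Fin k → ℕ) (x : ℕ) : Set ℕ :=
  lzero '' Zfac a x

/-- The set of differences between consecutive elements of a set `T ⊆ ℕ`. -/
def deltaSet (T : Set ℕ) : Set ℕ :=
  {d | ∃ u ∈ T, ∃ v ∈ T, u < v ∧ v - u = d ∧ ∀ t ∈ T, ¬(u < t ∧ t < v)}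

/-- `Δ∞(x)`. -/
def DeltaInf {k : ℕ} (a : Fin k → ℕ) (x : ℕ) : Set ℕ := deltaSet (LinfSet a x)

/-- `Δ∞(S) = ⋃ x ∈ S, Δ∞(x)` (for `x ∉ S` the contribution is empty). -/
def DeltaInfS {k : ℕ} (a : Fin k → ℕ) : Set ℕ := ⋃ x : ℕ, DeltaInf a x

/-- `Δ₀(x)`. -/
def DeltaZero {k : ℕ} (a : Fin k → ℕ) (x : ℕ) : Set ℕ := deltaSet (LzeroSet a x)

/-- `Δ₀(S) = ⋃ x ∈ S, Δ₀(x)` (for `x ∉ S` the contribution is empty). -/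
def DeltaZeroS {k : ℕ} (a : Fin k → ℕ) : Set ℕ := ⋃ x : ℕ, DeltaZero a x

/-- `a` is a system of minimal generators: no generator is a `ℕ`-combination of the others. -/
def MinimalGens {k : ℕ} (a : Fin k → ℕ) : Prop :=
  ∀ i : Fin k, ¬ ∃ z : Fin k → ℕ, z i = 0 ∧ ∑ j, z j * a j = a i

/-!
Adding one copy of `a_i` to a factorization of `x` whose largest coordinate is the `i`-th raises
the `∞`-length by exactly one. Conversely, removing one copy from a factorization of `x + a_i`
keeps the `i`-th coordinate largest unless another coordinate `z_j` ties with it. A tie is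
impossible near the top: if `z` factors `x` and `z_i` is at least `x / a_i - B`, then the other
coordinates share a remainder `x - z_i a_i ≤ B a_i` that does not grow with `x`, whereas `z_i` does.
-/

section Factorizations

variable {k : ℕ} {a z : Fin k → ℕ} {x ℓ : ℕ} {i j : Fin k}

theorem MinimalGens.pos (h : MinimalGens a) (i : Fin k) : 0 < a i :=
  Nat.pos_of_ne_zero fun hi => h i ⟨0, rfl, by simp [hi]⟩

theorem eq_linf_iff_forall_le : z i = linf z ↔ ∀ j, z j ≤ z i := by
  have hle : z i ≤ linf z := le_sup (f := z) (mem_univ i)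
  rw [← hle.ge_iff_eq]
  simp [linf]

theorem mem_LinfSetI_iff :
    ℓ ∈ LinfSetI a x i ↔ ∃ z ∈ Zfac a x, z i = ℓ ∧ ∀ j, z j ≤ ℓ := by
  constructor
  · rintro ⟨z, ⟨hz, hi⟩, rfl⟩
    exact ⟨z, hz, hi, hi ▸ eq_linf_iff_forall_le.mp hi⟩
  · rintro ⟨z, hz, rfl, hmax⟩
    have hi := eq_linf_iff_forall_le.mpr hmax
    exact ⟨z, ⟨hz, hi⟩, hi.symm⟩

theorem add_single_mem_Zfac_iff : z + Pi.single i 1 ∈ Zfac a (x + a i) ↔ z ∈ Zfac a x := by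
  simp [Zfac, add_mul, sum_add_distrib, Pi.single_apply]

theorem mul_add_le_of_mem_Zfac (hz : z ∈ Zfac a x) (hij : i ≠ j) (hj : 0 < a j) :
    z i * a i + z j ≤ x :=
  calc
    z i * a i + z j ≤ z i * a i + z j * a j := by gcongr; exact Nat.le_mul_of_pos_right _ hj
    _ = ∑ t ∈ {i, j}, z t * a t := (sum_pair (f := fun t => z t * a t) hij).symm
    _ ≤ ∑ t, z t * a t := sum_le_sum_of_subset (subset_univ _)
    _ = x := hz

theorem add_one_mem_LinfSetI_add_iff :
    ℓ + 1 ∈ LinfSetI a (x + a i) i ↔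
      ∃ z ∈ Zfac a x, z i = ℓ ∧ ∀ j ≠ i, z j ≤ ℓ + 1 := by
  rw [mem_LinfSetI_iff]
  constructor
  · rintro ⟨w, hw, hwi, hmax⟩
    have hle : Pi.single i 1 ≤ w := fun j => by
      obtain rfl | hj := eq_or_ne j i <;> simp [*]
    obtain ⟨z, rfl⟩ : ∃ z, w = z + Pi.single i 1 :=
      ⟨w - Pi.single i 1, (tsub_add_cancel_of_le hle).symm⟩
    refine ⟨z, add_single_mem_Zfac_iff.mp hw, by simpa using hwi, fun j hj => ?_⟩
    simpa [hj] using hmax j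
  · rintro ⟨z, hz, rfl, hmax⟩
    refine ⟨z + Pi.single i 1, add_single_mem_Zfac_iff.mpr hz, by simp, fun j => ?_⟩
    obtain rfl | hj := eq_or_ne j i
    · simp
    · simpa [hj] using hmax j hj

theorem add_one_mem_LinfSetI_add_iff_of_le (ha : ∀ j, 0 < a j) (hx : x ≤ ℓ * (a i + 1)) :
    ℓ + 1 ∈ LinfSetI a (x + a i) i ↔ ℓ ∈ LinfSetI a x i := by
  rw [add_one_mem_LinfSetI_add_iff, mem_LinfSetI_iff]
  constructor
  · rintro ⟨z, hz, rfl, -⟩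
    refine ⟨z, hz, rfl, fun j => ?_⟩
    obtain rfl | hj := eq_or_ne j i
    · rfl
    · linarith [mul_add_le_of_mem_Zfac hz hj.symm (ha j)]
  · rintro ⟨z, hz, hi, hmax⟩
    exact ⟨z, hz, hi, fun j _ => (hmax j).trans ℓ.le_succ⟩

end Factorizations

theorem le_mul_add_one_of_div_sub_le {K : Type*} [Field K] [LinearOrder K] [IsStrictOrderedRing K]
    {x c y B : K} (hc : 0 < c) (hB : B * (c + 1) ≤ x / c) (hy : x / c - B ≤ y) :
    x ≤ y * (c + 1) :=
  calc
    x = x / c * (c + 1) - x / c := by field_simp; ring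
    _ ≤ x / c * (c + 1) - B * (c + 1) := by gcongr
    _ = (x / c - B) * (c + 1) := by ring
    _ ≤ y * (c + 1) := by gcongr

theorem stmt_3_general {K : Type*} [Field K] [LinearOrder K] [IsStrictOrderedRing K]
    [Archimedean K] {k : ℕ} {a : Fin k → ℕ} (ha : ∀ j, 0 < a j) (B : K) (i : Fin k) :
    ∀ᶠ x : ℕ in Filter.atTop,
      {ℓ : ℕ | ℓ ∈ LinfSetI a (x + a i) i ∧ ((x : K) + (a i : K)) / (a i : K) - B ≤ (ℓ : K)} =
        (fun n => 1 + n) '' {ℓ : ℕ | ℓ ∈ LinfSetI a x i ∧ (x : K) / (a i : K) - B ≤ (ℓ : K)} := by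
  have hai : (0 : K) < a i := mod_cast ha i
  have hlarge := (tendsto_natCast_atTop_atTop (R := K)).atTop_div_const hai
  filter_upwards [hlarge.eventually_ge_atTop B, hlarge.eventually_ge_atTop (B * (a i + 1))]
    with x hBx hBax
  have hdiv : ((x : K) + a i) / a i = x / a i + 1 := by rw [add_div, div_self hai.ne']
  ext (_ | ℓ)
  · have hzero : ¬ (x : K) / a i + 1 - B ≤ 0 := by linarith
    simp [hdiv, hzero, -tsub_le_iff_right]
  · have hshift : (x : K) / a i - B ≤ ℓ →
        (ℓ + 1 ∈ LinfSetI a (x + a i) i ↔ ℓ ∈ LinfSetI a x i) := fun hℓ =>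
      add_one_mem_LinfSetI_add_iff_of_le ha (mod_cast le_mul_add_one_of_div_sub_le hai hBax hℓ)
    have hbound : (x : K) / a i + 1 - B ≤ ℓ + 1 ↔ (x : K) / a i - B ≤ ℓ := by
      constructor <;> intro h <;> linarith
    simpa [hdiv, hbound, add_comm 1, and_congr_left_iff, -tsub_le_iff_right] using hshift

/-- The portion of `𝓛∞(x,i)` within `B` of its top end shifts by exactly `1`
when `x` is replaced by `x + a_i`, for all sufficiently large `x ∈ S`. -/
theorem stmt_3 (k : ℕ) (a : Fin k → ℕ)
    (hmono : StrictMono a)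
    (hgcd : Finset.univ.gcd a = 1)
    (hmin : MinimalGens a)
    (B : ℚ) (hB : 0 < B) (i : Fin k) :
    ∃ N : ℕ, ∀ x : ℕ, N ≤ x → (Zfac a x).Nonempty →
      {ℓ : ℕ | ℓ ∈ LinfSetI a (x + a i) i ∧
          ((x : ℚ) + (a i : ℚ)) / (a i : ℚ) - B ≤ (ℓ : ℚ)} =
        (fun n => 1 + n) '' {ℓ : ℕ | ℓ ∈ LinfSetI a x i ∧
          (x : ℚ) / (a i : ℚ) - B ≤ (ℓ : ℚ)} := by
  obtain ⟨N, hN⟩ := Filter.eventually_atTop.mp (stmt_3_general hmin.pos B i)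
  exact ⟨N, fun x hx _ => hN x hx⟩
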